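/- arXiv:2410.24003 — 2 statements merged into one kernel-verified Lean document; each statement's English description precedes it below -/
import Mathlib

section
/- Let F and G be cdfs on ℝ having the same set of atoms, let Y be a real-valued random variable with cdf G, and define d_{G,F}(u) = E[J_F(Y,u)] − u. Then for every u ∈ (0,1), |d_{G,F}(u)| ≤ 3·sup_{y∈ℝ} |G(y) − F(y)|. -/
/-!
Let `S = sup |G - F|` and let `q` be the `u`-quantile of `F`, so that `F(q-) ≤ u ≤ F(q)`.
The function `y ↦ J_F(y,u)` equals `1` on `(-∞, q)`, some `t ∈ [0,1]` at `q`, and to the right of `q`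
it is the indicator of a set `A` on which `F = u = F(q)`. Hence
`E[J_F(Y,u)] = G(q-) + t ΔG(q) + μ(A)`.

If `q` is an atom then `u = F(q-) + t ΔF(q)`, so `G(q-) + t ΔG(q) - u` is a convex combination of
`G(q-) - F(q-)` and `G(q) - F(q)`; if `q` is not an atom of `F`, it is not one of `G` either and the
quantity is `G(q) - F(q)`. In both cases it is at most `S` in absolute value. Finally
`0 ≤ μ(A) ≤ 2S`, because `G(m) - G(q) ≤ F(m) - F(q) + 2S = 2S` for `m ∈ A` and, by inner
regularity, `μ(A)` is approximated by the mass of intervals `(q, m]` with `m ∈ A`.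
-/

open MeasureTheory ProbabilityTheory Filter Set

noncomputable section

/-- `D(u) = min(1, max(0,u))`, the cdf of the uniform distribution on `(0,1)`. -/
def unifD (u : ℝ) : ℝ := min 1 (max 0 u)

/-- The jump `ΔG(x) = G(x) - G(x-)` of a function `G` at `x`. -/
def jump (G : ℝ → ℝ) (x : ℝ) : ℝ := G x - Function.leftLim G x

/-- `J_G(x,u)`. -/
def JG (G : ℝ → ℝ) (x u : ℝ) : ℝ :=
  if 0 < jump G x then unifD ((u - Function.leftLim G x) / jump G x)
  else if G x ≤ u then 1 else 0

/-- Generalized inverse `F⁻¹(u) = inf {x : F(x) ≥ u}`. -/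
def Ginv (F : ℝ → ℝ) (u : ℝ) : ℝ := sInf {x : ℝ | u ≤ F x}

/-- `F` is a cumulative distribution function on `ℝ`. -/
structure IsCDF (F : ℝ → ℝ) : Prop where
  mono : Monotone F
  right_cont : ∀ x, ContinuousWithinAt F (Set.Ici x) x
  tendsto_atBot : Filter.Tendsto F Filter.atBot (nhds 0)
  tendsto_atTop : Filter.Tendsto F Filter.atTop (nhds 1)

lemma IsCDF.mem_Icc {F : ℝ → ℝ} (hF : IsCDF F) (x : ℝ) : 0 ≤ F x ∧ F x ≤ 1 :=
  ⟨hF.mono.le_of_tendsto hF.tendsto_atBot x, hF.mono.ge_of_tendsto hF.tendsto_atTop x⟩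

lemma IsCDF.exists_quantile {F : ℝ → ℝ} (hF : IsCDF F) {u : ℝ} (hu : u ∈ Ioo (0:ℝ) 1) :
    ∃ q, u ≤ F q ∧ ∀ y < q, F y < u := by
  obtain ⟨a, ha⟩ := (hF.tendsto_atBot.eventually_lt_const hu.1).exists
  obtain ⟨b, hb⟩ := (hF.tendsto_atTop.eventually_const_lt hu.2).exists
  have hne : {x : ℝ | u ≤ F x}.Nonempty := ⟨b, hb.le⟩
  have hbd : BddBelow {x : ℝ | u ≤ F x} := by
    refine ⟨a, fun x hx => ?_⟩
    by_contra! h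
    exact absurd (hF.mono h.le) (not_le.2 (ha.trans_le hx))
  refine ⟨sInf {x : ℝ | u ≤ F x}, ?_, fun y hy => ?_⟩
  · have h := (hF.right_cont (sInf {x : ℝ | u ≤ F x})).mono Ioi_subset_Ici_self
    refine ge_of_tendsto h ?_
    filter_upwards [self_mem_nhdsWithin] with y hy
    obtain ⟨x, hx, hxy⟩ := exists_lt_of_csInf_lt hne hy
    exact le_trans hx (hF.mono hxy.le)
  · by_contra! h
    exact absurd (csInf_le hbd h) (not_le.2 hy)

/-- A uniform bound between two monotone functions passes to their left limits. -/
lemma abs_leftLim_sub_le {F G : ℝ → ℝ} (hF : Monotone F) (hG : Monotone G) {S : ℝ}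
    (h : ∀ y, |G y - F y| ≤ S) (x : ℝ) :
    |Function.leftLim G x - Function.leftLim F x| ≤ S :=
  le_of_tendsto ((hG.tendsto_leftLim x).sub (hF.tendsto_leftLim x)).abs
    (Eventually.of_forall h)

/-- `A` is exhausted by compact sets, each contained in an interval `(q, m]` with `m ∈ A`. -/
lemma measureReal_le_of_forall_Ioc (μ : Measure ℝ) [IsProbabilityMeasure μ] {A : Set ℝ}
    (hA : MeasurableSet A) {q c : ℝ} (hc : 0 ≤ c) (hq : ∀ m ∈ A, q < m)
    (h : ∀ m ∈ A, μ.real (Ioc q m) ≤ c) : μ.real A ≤ c := by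
  refine ENNReal.toReal_le_of_le_ofReal hc ?_
  by_contra! hlt
  obtain ⟨K, hKA, hK, hcK⟩ := hA.exists_lt_isCompact hlt
  rcases K.eq_empty_or_nonempty with rfl | hne
  · simp at hcK
  obtain ⟨m, hm⟩ := hK.exists_isGreatest hne
  have hsub : K ⊆ Ioc q m := fun y hy => ⟨hq y (hKA hy), hm.2 hy⟩
  have h1 : μ (Ioc q m) ≤ ENNReal.ofReal c := by
    rw [← ENNReal.ofReal_toReal (measure_ne_top μ (Ioc q m))]
    exact ENNReal.ofReal_le_ofReal (h m (hKA hm.1))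
  exact absurd ((measure_mono hsub).trans h1) (not_le.2 hcK)

lemma JG_mem_Icc (F : ℝ → ℝ) (x u : ℝ) : 0 ≤ JG F x u ∧ JG F x u ≤ 1 := by
  unfold JG unifD
  split_ifs <;> simp

lemma JG_eq_one {F : ℝ → ℝ} {x u : ℝ} (h : F x < u) : JG F x u = 1 := by
  unfold JG unifD
  split_ifs with h1 h2
  · have : 1 ≤ (u - Function.leftLim F x) / jump F x := by
      rw [le_div_iff₀ h1]; unfold jump; linarith
    exact min_eq_left (this.trans (le_max_right _ _))
  · rfl
  · exact absurd h.le h2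

/-- This applies to every `x` to the right of the `u`-quantile of `F`: there `J_F(x,u)` vanishes
at the atoms of `F`. -/
lemma JG_eq_of_le_leftLim {F : ℝ → ℝ} {x u : ℝ} (h : u ≤ Function.leftLim F x) :
    JG F x u = if ¬ 0 < jump F x ∧ F x ≤ u then 1 else 0 := by
  unfold JG unifD
  by_cases h1 : 0 < jump F x
  · have : (u - Function.leftLim F x) / jump F x ≤ 0 :=
      div_nonpos_of_nonpos_of_nonneg (by linarith) h1.le
    simp [h1, this]
  · simp [h1]

/-- If `F` and `G` are cdfs with the same set of atoms and `Y ~ G`, then for every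
`u ∈ (0,1)`, `|d_{G,F}(u)| = |E[J_F(Y,u)] - u| ≤ 3·sup_y |G(y) - F(y)|`. -/
theorem stmt6 (μ : Measure ℝ) [IsProbabilityMeasure μ]
    (G : ℝ → ℝ) (hG : ∀ x, G x = (μ (Set.Iic x)).toReal)
    (F : ℝ → ℝ) (hF : IsCDF F)
    (hAtoms : {x : ℝ | 0 < jump F x} = {x : ℝ | 0 < jump G x}) :
    ∀ u ∈ Set.Ioo (0:ℝ) 1,
      |(∫ y, JG F y u ∂μ) - u| ≤ 3 * ⨆ y : ℝ, |G y - F y| := by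
  intro u hu
  have hGm : Monotone G := fun x y hxy => by
    rw [hG, hG]
    exact measureReal_mono (Iic_subset_Iic.2 hxy)
  have hG01 : ∀ x, 0 ≤ G x ∧ G x ≤ 1 := fun x => by
    rw [hG]
    exact ⟨measureReal_nonneg, measureReal_le_one⟩
  have hbdd : BddAbove (range fun y : ℝ => |G y - F y|) := by
    refine ⟨1, ?_⟩
    rintro _ ⟨y, rfl⟩
    have := hG01 y
    have := hF.mem_Icc y
    exact abs_le.2 ⟨by linarith, by linarith⟩
  set S := ⨆ y : ℝ, |G y - F y| with hS
  have hSy : ∀ y, |G y - F y| ≤ S := fun y => le_ciSup hbdd y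
  have hS0 : 0 ≤ S := (abs_nonneg _).trans (hSy 0)
  have hIoc : ∀ a b, a ≤ b → μ.real (Ioc a b) = G b - G a := fun a b hab => by
    rw [← Iic_sdiff_Iic, measureReal_sdiff (Iic_subset_Iic.2 hab) measurableSet_Iic, hG, hG]
    rfl
  have hIio : ∀ x, μ.real (Iio x) = Function.leftLim G x := fun x => by
    have hGc : G = cdf μ := by
      funext y
      rw [hG, cdf_eq_real]
      rfl
    have h := (cdf μ).measure_Iio (tendsto_cdf_atBot μ) x
    rw [measure_cdf, sub_zero, ← hGc] at h
    have h0 : 0 ≤ Function.leftLim G x :=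
      (hG01 (x - 1)).1.trans (hGm.le_leftLim (by linarith))
    rw [measureReal_def, h, ENNReal.toReal_ofReal h0]
  have hsing : ∀ x, μ.real {x} = jump G x := fun x => by
    have h : μ.real (Iic x) = μ.real (Iio x) + μ.real {x} := by
      rw [← Iio_union_right, measureReal_union (by simp) (measurableSet_singleton x)]
    have h2 : G x = μ.real (Iic x) := hG x
    rw [jump, ← hIio, h2, h]
    ring
  obtain ⟨q, huq, hqlt⟩ := hF.exists_quantile hu
  set t := JG F q u with ht
  set A : Set ℝ := {y | q < y ∧ ¬ 0 < jump F y ∧ F y ≤ u} with hA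
  have hjm : Measurable (jump F) := hF.mono.measurable.sub hF.mono.leftLim.measurable
  have hAm : MeasurableSet A :=
    (measurableSet_lt measurable_const measurable_id).inter
      ((measurableSet_lt measurable_const hjm).compl.inter
        (measurableSet_le hF.mono.measurable measurable_const))
  have hJ : ∀ y, JG F y u = (Iio q).indicator (fun _ => (1:ℝ)) y
      + ({q} : Set ℝ).indicator (fun _ => t) y + A.indicator (fun _ => (1:ℝ)) y := by
    intro y
    rcases lt_trichotomy y q with h | h | h
    · rw [JG_eq_one (hqlt y h)]
      simp [hA, h, h.ne, h.le]
    · subst h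
      simp [hA, ht]
    · rw [JG_eq_of_le_leftLim (huq.trans (hF.mono.le_leftLim h))]
      simp [hA, h, h.ne', h.le, indicator_apply]
  have hint : ∫ y, JG F y u ∂μ = Function.leftLim G q + t * jump G q + μ.real A := by
    simp_rw [hJ]
    have i1 : Integrable ((Iio q).indicator (fun _ => (1:ℝ))) μ :=
      (integrable_const _).indicator measurableSet_Iio
    have i2 : Integrable (({q} : Set ℝ).indicator (fun _ => t)) μ :=
      (integrable_const _).indicator (measurableSet_singleton q)
    have i3 : Integrable (A.indicator (fun _ => (1:ℝ))) μ :=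
      (integrable_const _).indicator hAm
    have i12 : Integrable (fun y => (Iio q).indicator (fun _ => (1:ℝ)) y
        + ({q} : Set ℝ).indicator (fun _ => t) y) μ := i1.add i2
    rw [integral_add i12 i3, integral_add i1 i2,
      integral_indicator_const _ measurableSet_Iio,
      integral_indicator_const _ (measurableSet_singleton q),
      integral_indicator_const _ hAm, hIio, hsing]
    simp only [smul_eq_mul, mul_one]
    ring
  have hA2 : μ.real A ≤ 2 * S := by
    refine measureReal_le_of_forall_Ioc μ hAm (q := q) (by linarith) (fun m hm => hm.1) ?_
    intro m hm
    rw [hIoc q m hm.1.le]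
    have h1 := abs_le.1 (hSy m)
    have h2 := abs_le.1 (hSy q)
    have h3 : F m ≤ u := hm.2.2
    linarith [h1.2, h2.1]
  have hleft : Function.leftLim F q ≤ u :=
    le_of_tendsto (hF.mono.tendsto_leftLim q)
      (by filter_upwards [self_mem_nhdsWithin] with y hy using (hqlt y hy).le)
  have hmain : |Function.leftLim G q + t * jump G q - u| ≤ S := by
    have hL := abs_le.1 (abs_leftLim_sub_le hF.mono hGm hSy q)
    have hR := abs_le.1 (hSy q)
    by_cases hj : 0 < jump F q
    · have ht01 := JG_mem_Icc F q u
      rw [← ht] at ht01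
      have htu : t * jump F q = u - Function.leftLim F q := by
        have h0 : 0 ≤ (u - Function.leftLim F q) / jump F q :=
          div_nonneg (by linarith) hj.le
        have h1 : (u - Function.leftLim F q) / jump F q ≤ 1 := by
          rw [div_le_one hj]; unfold jump; linarith
        rw [ht, JG, if_pos hj, unifD, max_eq_right h0, min_eq_right h1,
          div_mul_cancel₀ _ hj.ne']
      have hu' : Function.leftLim G q + t * jump G q - u
          = (1 - t) * (Function.leftLim G q - Function.leftLim F q) + t * (G q - F q) := by
        have : u = t * jump F q + Function.leftLim F q := by linarith
        rw [this]; unfold jump; ring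
      rw [hu', abs_le]
      constructor <;> nlinarith [hL.1, hL.2, hR.1, hR.2, ht01.1, ht01.2]
    · -- Equality of the atom sets makes `q` a null point of `μ` as well.
      have hjG : ¬ 0 < jump G q := fun h =>
        hj (show q ∈ {x : ℝ | 0 < jump F x} from hAtoms ▸ h)
      have hG0 : jump G q = 0 :=
        le_antisymm (not_lt.1 hjG) (sub_nonneg.2 (hGm.leftLim_le le_rfl))
      have hGq : Function.leftLim G q = G q := by unfold jump at hG0; linarith
      have hFq : F q = u := by unfold jump at hj; linarith
      rw [hG0, mul_zero, add_zero, hGq, ← hFq]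
      exact hSy q
  have hA0 : 0 ≤ μ.real A := measureReal_nonneg
  rw [hint]
  rw [abs_le] at hmain ⊢
  constructor <;> linarith [hmain.1, hmain.2]
end
end

section
/- Let G be a cdf on ℝ, let Y be a real-valued random variable with cdf G, let ε > 0, and let [a,b] ⊆ [0,1] be an interval with b − a ≤ ε². Then E[ sup_{u,v ∈ [a,b]} |J_G(Y,u) − u − J_G(Y,v) + v|² ] ≤ 4ε². -/
/-!
For fixed `y` the map `u ↦ J_G(y,u)` is monotone with values in `[0,1]`. Writing
`W(y) = J_G(y,b) - J_G(y,a)`, both `J_G(y,u) - J_G(y,v)` and `u - v` have the same sign for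
`u, v ∈ [a,b]` and are bounded by `W(y)` and `b - a` respectively, so the squared difference is at
most `W(y)² + (b-a)² ≤ W(y) + (b-a)`.

It remains to see that `E[W(Y)] ≤ b - a`, which follows from `E[J_G(Y,u)] = u` for `0 < u < 1`
(lemma `JG_mean`): if `q` is the `u`-quantile of `G`, then almost surely `J_G(Y,u)` is `1` on
`Y < q`, `0` on `Y > q`, and on `Y = q` it is the constant that makes the mean equal to `u`.
The endpoints `0` and `1` only need the trivial bounds `0 ≤ J_G ≤ 1`. The resulting estimate
`2 (b - a)` is stronger than required.
-/

open MeasureTheory ProbabilityTheory Filter Set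

noncomputable section

lemma unifD_mono : Monotone unifD := fun _ _ h =>
  min_le_min le_rfl (max_le_max le_rfl h)

lemma JG_nonneg (G : ℝ → ℝ) (x u : ℝ) : 0 ≤ JG G x u := by
  unfold JG unifD
  split_ifs <;> simp

lemma JG_le_one (G : ℝ → ℝ) (x u : ℝ) : JG G x u ≤ 1 := by
  unfold JG unifD
  split_ifs <;> simp

lemma JG_mono (G : ℝ → ℝ) (x : ℝ) : Monotone (JG G x) := by
  intro u v h
  unfold JG
  split_ifs with h1 h2 h3 h3
  · exact unifD_mono (by gcongr)
  · exact le_rfl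
  · exact absurd (h2.trans h) h3
  · exact zero_le_one
  · exact le_rfl

/-- Existence of a `u`-quantile: the first point at which the cdf reaches level `u`. -/
lemma exists_quantile (μ : Measure ℝ) [IsProbabilityMeasure μ] {u : ℝ} (h0 : 0 < u) (h1 : u < 1) :
    ∃ q, (∀ y < q, cdf μ y < u) ∧ u ≤ cdf μ q := by
  have hne : {x : ℝ | u ≤ cdf μ x}.Nonempty := by
    obtain ⟨x, hx⟩ := ((tendsto_cdf_atTop μ).eventually (lt_mem_nhds h1)).exists
    exact ⟨x, hx.le⟩
  have hbd : BddBelow {x : ℝ | u ≤ cdf μ x} := by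
    obtain ⟨x, hx⟩ := ((tendsto_cdf_atBot μ).eventually (gt_mem_nhds h0)).exists
    refine ⟨x, fun y hy => ?_⟩
    by_contra hlt
    push Not at hlt
    exact absurd ((monotone_cdf μ) hlt.le) (not_le.2 (hx.trans_le hy))
  refine ⟨sInf {x : ℝ | u ≤ cdf μ x}, fun y hy => ?_, ?_⟩
  · by_contra hlt
    exact absurd (csInf_le hbd (not_lt.1 hlt)) (not_le.2 hy)
  · have hc := ((cdf μ).right_continuous (sInf {x : ℝ | u ≤ cdf μ x})).mono Ioi_subset_Ici_self
    refine ge_of_tendsto hc ?_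
    filter_upwards [self_mem_nhdsWithin] with y hy
    obtain ⟨x, hx, hxy⟩ := exists_lt_of_csInf_lt hne hy
    exact le_trans hx ((monotone_cdf μ) hxy.le)

/-- Right of a point `q` with cdf at least `u`, the flat stretch of the cdf at level `u` has no mass. -/
lemma flat_null (μ : Measure ℝ) [IsProbabilityMeasure μ] {u q : ℝ} (hq : u ≤ cdf μ q) :
    μ {y | q < y ∧ cdf μ y ≤ u} = 0 := by
  have key : ∀ y, cdf μ y ≤ u → μ (Ioc q y) = 0 := by
    intro y hy
    have h := (cdf μ).measure_Ioc q y
    rw [measure_cdf] at h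
    rw [h, ENNReal.ofReal_eq_zero]
    linarith
  refine measure_null_of_locally_null _ fun x hx => ?_
  by_cases hmax : ∃ x', x < x' ∧ cdf μ x' ≤ u
  · obtain ⟨x', hx', hu⟩ := hmax
    exact ⟨Ioc q x', mem_nhdsWithin_of_mem_nhds (Ioc_mem_nhds hx.1 hx'), key x' hu⟩
  · push Not at hmax
    refine ⟨Ioc q x, mem_of_superset self_mem_nhdsWithin fun y hy => ⟨hy.1, ?_⟩, key x hx.2⟩
    by_contra hlt
    exact absurd hy.2 (not_le.2 (hmax y (not_le.1 hlt)))

/-- `J_G(Y,u)` is integrable with mean `u`. -/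
lemma JG_mean (μ : Measure ℝ) [IsProbabilityMeasure μ] {u : ℝ} (h0 : 0 < u) (h1 : u < 1) :
    Integrable (fun y => JG (cdf μ) y u) μ ∧ ∫ y, JG (cdf μ) y u ∂μ = u := by
  obtain ⟨q, hlt, hq⟩ := exists_quantile μ h0 h1
  have hmono := monotone_cdf μ
  set c := JG (cdf μ) q u with hc
  have hleft : Function.leftLim (cdf μ) q ≤ u := by
    refine le_of_tendsto (hmono.tendsto_leftLim q) ?_
    filter_upwards [self_mem_nhdsWithin] with y hy using (hlt y hy).le
  have hl0 : 0 ≤ Function.leftLim (cdf μ) q :=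
    (cdf_nonneg μ (q - 1)).trans (hmono.le_leftLim (by linarith))
  have hj0 : 0 ≤ jump (cdf μ) q := sub_nonneg.2 (hmono.leftLim_le le_rfl)
  have hae : (fun y => JG (cdf μ) y u) =ᵐ[μ]
      fun y => (Iio q).indicator (fun _ => (1 : ℝ)) y + ({q} : Set ℝ).indicator (fun _ => c) y := by
    have hnull : ∀ᵐ y ∂μ, ¬ (q < y ∧ cdf μ y ≤ u) := by
      rw [ae_iff]; simpa using flat_null μ hq
    filter_upwards [hnull] with y hy
    rcases lt_trichotomy y q with h | h | h
    · have hyu := hlt y h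
      rw [indicator_of_mem (mem_Iio.2 h), indicator_of_notMem (by simpa using h.ne), add_zero]
      unfold JG
      split_ifs with hj hle
      · unfold unifD
        have : 1 ≤ (u - Function.leftLim (cdf μ) y) / jump (cdf μ) y := by
          rw [le_div_iff₀ hj, jump]; linarith
        rw [max_eq_right (by linarith), min_eq_left this]
      · rfl
      · exact absurd hyu.le hle
    · subst h
      simp [hc]
    · rw [indicator_of_notMem (by simpa using h.le), indicator_of_notMem (by simpa using h.ne'),
        add_zero]
      have hyl : u ≤ Function.leftLim (cdf μ) y := hq.trans (hmono.le_leftLim h)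
      unfold JG
      split_ifs with hj hle
      · unfold unifD
        have : (u - Function.leftLim (cdf μ) y) / jump (cdf μ) y ≤ 0 :=
          div_nonpos_of_nonpos_of_nonneg (by linarith) hj.le
        rw [max_eq_left this]; simp
      · exact absurd ⟨h, hle⟩ hy
      · rfl
  have hi1 : Integrable ((Iio q).indicator (fun _ => (1 : ℝ))) μ :=
    (integrable_const _).indicator measurableSet_Iio
  have hi2 : Integrable (({q} : Set ℝ).indicator (fun _ => c)) μ :=
    (integrable_const _).indicator (measurableSet_singleton q)
  refine ⟨(hi1.add hi2).congr hae.symm, ?_⟩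
  have m1 : μ.real (Iio q) = Function.leftLim (cdf μ) q := by
    have h := (cdf μ).measure_Iio (tendsto_cdf_atBot μ) q
    rw [measure_cdf] at h
    rw [measureReal_def, h, sub_zero, ENNReal.toReal_ofReal hl0]
  have m2 : μ.real {q} = jump (cdf μ) q := by
    have h := (cdf μ).measure_singleton q
    rw [measure_cdf] at h
    rw [measureReal_def, h, ← jump, ENNReal.toReal_ofReal hj0]
  rw [integral_congr_ae hae, integral_add hi1 hi2, integral_indicator_const _ measurableSet_Iio,
    integral_indicator_const _ (measurableSet_singleton q), m1, m2]
  simp only [smul_eq_mul, mul_one]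
  rcases hj0.lt_or_eq with hj | hj
  · have hcv : c = (u - Function.leftLim (cdf μ) q) / jump (cdf μ) q := by
      rw [hc, JG, if_pos hj, unifD, max_eq_right (div_nonneg (by linarith) hj.le), min_eq_right]
      rw [div_le_one hj, jump]; linarith
    rw [hcv, mul_div_cancel₀ _ hj.ne']; ring
  · rw [← hj, zero_mul]
    unfold jump at hj
    linarith

/-- The increment `J_G(Y,b) - J_G(Y,a)` has an integrable majorant with mean at most `b - a`. -/
lemma increment_majorant (μ : Measure ℝ) [IsProbabilityMeasure μ] {a b : ℝ} (ha : 0 ≤ a)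
    (hab : a < b) (hb : b ≤ 1) :
    ∃ h : ℝ → ℝ, Integrable h μ ∧ (∀ y, JG (cdf μ) y b - JG (cdf μ) y a ≤ h y) ∧
      ∫ y, h y ∂μ ≤ b - a := by
  obtain ⟨f, hf, hfb, hfi⟩ : ∃ f : ℝ → ℝ, Integrable f μ ∧ (∀ y, JG (cdf μ) y b ≤ f y) ∧
      ∫ y, f y ∂μ ≤ b := by
    rcases hb.lt_or_eq with hb | rfl
    · obtain ⟨hi, he⟩ := JG_mean μ (ha.trans_lt hab) hb
      exact ⟨_, hi, fun _ => le_rfl, he.le⟩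
    · exact ⟨fun _ => 1, integrable_const _, fun y => JG_le_one _ _ _, by simp⟩
  obtain ⟨g, hg, hga, hgi⟩ : ∃ g : ℝ → ℝ, Integrable g μ ∧ (∀ y, g y ≤ JG (cdf μ) y a) ∧
      a ≤ ∫ y, g y ∂μ := by
    rcases ha.lt_or_eq with ha | rfl
    · obtain ⟨hi, he⟩ := JG_mean μ ha (hab.trans_le hb)
      exact ⟨_, hi, fun _ => le_rfl, he.ge⟩
    · exact ⟨fun _ => 0, integrable_const _, fun y => JG_nonneg _ _ _, by simp⟩
  refine ⟨fun y => f y - g y, hf.sub hg, fun y => sub_le_sub (hfb y) (hga y), ?_⟩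
  rw [integral_sub hf hg]
  linarith

lemma sq_increment_le (G : ℝ → ℝ) (y : ℝ) {a b u v : ℝ} (hlen : b - a ≤ 1)
    (hu : u ∈ Icc a b) (hv : v ∈ Icc a b) :
    (JG G y u - u - JG G y v + v) ^ 2 ≤ (JG G y b - JG G y a) + (b - a) := by
  -- The expression is antisymmetric in `u, v`, so it suffices to treat `v ≤ u`.
  wlog h : v ≤ u generalizing u v
  · have := this hv hu (not_le.1 h).le
    linarith [show (JG G y u - u - JG G y v + v) ^ 2 = (JG G y v - v - JG G y u + u) ^ 2 by ring]
  have h1 := JG_mono G y h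
  have h2 := JG_mono G y hu.2
  have h3 := JG_mono G y hv.1
  have h4 := JG_le_one G y b
  have h5 := JG_nonneg G y a
  obtain ⟨hu1, hu2⟩ := hu
  obtain ⟨hv1, hv2⟩ := hv
  have hp : 0 ≤ (JG G y u - JG G y v) * (u - v) := mul_nonneg (by linarith) (by linarith)
  have hs : (JG G y u - JG G y v) ^ 2 ≤ JG G y u - JG G y v := by nlinarith
  have ht : (u - v) ^ 2 ≤ u - v := by nlinarith
  nlinarith

/-- If `Y ~ G`, `ε > 0` and `[a,b] ⊆ [0,1]` with `b - a ≤ ε²`, then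
`E[ sup_{u,v ∈ [a,b]} |J_G(Y,u) - u - J_G(Y,v) + v|² ] ≤ 4ε²`. -/
theorem stmt8 (μ : Measure ℝ) [IsProbabilityMeasure μ]
    (G : ℝ → ℝ) (hG : ∀ x, G x = (μ (Set.Iic x)).toReal)
    (ε : ℝ) (hε : 0 < ε) (a b : ℝ) (ha : 0 ≤ a) (hab : a ≤ b) (hb : b ≤ 1)
    (hlen : b - a ≤ ε ^ 2) :
    (∫ y, (⨆ u ∈ Set.Icc a b, ⨆ v ∈ Set.Icc a b,
        (JG G y u - u - JG G y v + v) ^ 2) ∂μ) ≤ 4 * ε ^ 2 := by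
  have hGc : G = cdf μ := by
    funext x
    rw [hG, cdf_eq_real, measureReal_def]
  subst hGc
  obtain ⟨h, hi, hle, hint⟩ : ∃ h : ℝ → ℝ, Integrable h μ ∧
      (∀ y, JG (cdf μ) y b - JG (cdf μ) y a ≤ h y) ∧ ∫ y, h y ∂μ ≤ b - a := by
    rcases hab.lt_or_eq with hab | rfl
    · exact increment_majorant μ ha hab hb
    · exact ⟨fun _ => 0, integrable_const _, fun y => by simp, by simp⟩
  -- Comparing with an integrable majorant needs no measurability of the supremum.
  have hmain : (∫ y, (⨆ u ∈ Set.Icc a b, ⨆ v ∈ Set.Icc a b,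
      (JG (cdf μ) y u - u - JG (cdf μ) y v + v) ^ 2) ∂μ) ≤ ∫ y, (h y + (b - a)) ∂μ := by
    refine integral_mono_of_nonneg (Eventually.of_forall fun y => ?_)
      (hi.add (integrable_const _)) (Eventually.of_forall fun y => ?_)
    · exact Real.iSup_nonneg fun u => Real.iSup_nonneg fun _ => Real.iSup_nonneg fun v =>
        Real.iSup_nonneg fun _ => sq_nonneg _
    · have hpos : 0 ≤ h y + (b - a) := by
        linarith [hle y, JG_mono (cdf μ) y hab]
      refine Real.iSup_le (fun u => Real.iSup_le (fun hu => Real.iSup_le (fun v =>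
        Real.iSup_le (fun hv => ?_) hpos) hpos) hpos) hpos
      linarith [hle y, sq_increment_le (cdf μ) y (by linarith) hu hv]
  rw [integral_add hi (integrable_const _)] at hmain
  simp only [integral_const, probReal_univ, one_smul] at hmain
  nlinarith [sq_nonneg ε]
end
end
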